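/- Let K be an algebraically closed field and let m_1 < m_2 < … < m_n be positive integers such that gcd(m_{i−1}, m_1) = 1 and m_i ≥ max{m_{i−1}·m_1, m_{i−1}·(m_{i−1} − m_1)} for all 3 ≤ i ≤ n. Then the monomial curve C(m_1, m_2, …, m_n) in P^n is a set-theoretic complete intersection: there exist n − 1 homogeneous polynomials in K[x_0, …, x_n] whose set of common zeros in K^{n+1} is exactly the affine cone {(u^{m_n}, u^{m_n − m_1} v^{m_1}, …, u^{m_n − m_{n−1}} v^{m_{n−1}}, v^{m_n}) : u, v ∈ K}. -/

import Mathlib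

/-!
On the chart `x₀ ≠ 0` the curve is `xᵢ = x₀ t ^ mᵢ`, and on the hyperplane `x₀ = 0` it is the
single projective point `x₁ = ⋯ = xₙ₋₁ = 0`. Since `gcd(m₁, m₂) = 1`, the binomial
`x₁ ^ m₂ - x₀ ^ (m₂ - m₁) x₂ ^ m₁` forces `xᵢ = x₀ t ^ mᵢ` for `i = 1, 2` and some `t`.

Each further equation propagates this from `xᵢ` to `xᵢ₊₁`. With `s = m₁`, `p = mᵢ`, `M = mᵢ₊₁`,
expand `x₀ ^ (M - p) (xᵢ₊₁ - x₀ t ^ M) ^ p` and replace each `x₀ ^ (M - p) (x₀ t ^ M) ^ k` by a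
monomial `x₀ ^ e x₁ ^ a xᵢ ^ b` of degree `M - p + k` with `a s + b p = k M`. Such monomials exist
by coprimality and the lower bounds on `M`; for `k < p` they involve `x₀` or `x₁`, while for
`k = p` the monomial is `xᵢ ^ M`, so on `x₀ = x₁ = 0` the equation reads `xᵢ = 0`.
-/

open Finset MvPolynomial

section UmbralSubPow

variable {R S σ : Type*} [CommRing R] [CommRing S]

/-- The umbral power `(y - w) ^ p`: the binomial expansion of `(y - t) ^ p` with `w k` in place of
`t ^ k`. It lets one write a polynomial that becomes a perfect `p`-th power only after evaluation
along a curve. -/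
def umbralSubPow (y : R) (w : ℕ → R) (p : ℕ) : R :=
  ∑ k ∈ range (p + 1), ((-1) ^ k * p.choose k : ℤ) • (y ^ (p - k) * w k)

lemma map_umbralSubPow (f : R →+* S) (y : R) (w : ℕ → R) (p : ℕ) :
    f (umbralSubPow y w p) = umbralSubPow (f y) (fun k => f (w k)) p := by
  simp only [umbralSubPow, map_sum, map_zsmul, map_mul, map_pow]

lemma umbralSubPow_eq_mul_sub_pow {y c t : R} {w : ℕ → R} {p : ℕ}
    (hw : ∀ k ≤ p, w k = c * t ^ k) : umbralSubPow y w p = c * (y - t) ^ p := by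
  rw [sub_eq_neg_add, add_pow, mul_sum]
  refine sum_congr rfl fun k hk => ?_
  rw [hw k (mem_range_succ_iff.mp hk), neg_pow t, zsmul_eq_mul]
  push_cast
  ring

lemma umbralSubPow_eq_last {y : R} {w : ℕ → R} {p : ℕ} (hw : ∀ k < p, w k = 0) :
    umbralSubPow y w p = (-1) ^ p * w p := by
  rw [umbralSubPow, sum_range_succ, sum_eq_zero fun k hk => by rw [hw k (mem_range.mp hk)]; simp]
  simp

lemma umbralSubPow_mem {A : Type*} [SetLike A R] [SubringClass A R] {T : A} {y : R} {w : ℕ → R}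
    {p : ℕ} (hy : y ∈ T) (hw : ∀ k, w k ∈ T) : umbralSubPow y w p ∈ T :=
  sum_mem fun k _ => zsmul_mem (mul_mem (pow_mem hy _) (hw k)) _

lemma isHomogeneous_umbralSubPow {y : MvPolynomial σ R} {w : ℕ → MvPolynomial σ R} {c d p : ℕ}
    (hy : y.IsHomogeneous d) (hw : ∀ k ≤ p, (w k).IsHomogeneous (c + d * k)) :
    (umbralSubPow y w p).IsHomogeneous (c + d * p) := by
  refine IsHomogeneous.sum _ _ _ fun k hk =>
    zsmul_mem (K := homogeneousSubmodule σ R (c + d * p)) ?_ _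
  have hk : k ≤ p := mem_range_succ_iff.mp hk
  have hdeg : d * (p - k) + (c + d * k) = c + d * p := by
    rw [add_left_comm, ← mul_add, Nat.sub_add_cancel hk]
  exact hdeg ▸ (hy.pow (p - k)).mul (hw k hk)

end UmbralSubPow

/-- The numerical condition on the exponents `s = m₁`, `p = mᵢ`, `M = mᵢ₊₁` under which the
curve can be lifted from the coordinates `x₀, …, xᵢ` to `xᵢ₊₁` by one equation. -/
structure LiftCondition (s p M : ℕ) : Prop where
  lt_mid : s < p
  mid_lt : p < M
  coprime : p.Coprime s
  mul_le : p * s ≤ M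
  mul_sub_le : p * (p - s) ≤ M

section Exponents

/-- The exponent `a` of `x₁` in the monomial `x₀ ^ e x₁ ^ a xᵢ ^ b` of weight `a s + b p = k M`:
the least solution of `a s ≡ k M` modulo `p`. -/
def firstExp (s p M k : ℕ) : ℕ :=
  (((k * M : ℕ) : ZMod p) * (s : ZMod p)⁻¹).val

/-- The exponent `b` of `xᵢ` in the monomial `x₀ ^ e x₁ ^ a xᵢ ^ b` of weight `a s + b p = k M`. -/
def midExp (s p M k : ℕ) : ℕ :=
  (k * M - firstExp s p M k * s) / p

/-- The exponent `e` of `x₀` that brings `x₀ ^ e x₁ ^ a xᵢ ^ b` to degree `M - p + k`. -/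
def zeroExp (s p M k : ℕ) : ℕ :=
  M - p + k - (firstExp s p M k + midExp s p M k)

variable {s p M k : ℕ}

lemma firstExp_lt (hp : 0 < p) : firstExp s p M k < p :=
  have : NeZero p := ⟨hp.ne'⟩
  ZMod.val_lt _

lemma firstExp_mul_modEq (hp : 0 < p) (hc : p.Coprime s) :
    firstExp s p M k * s ≡ k * M [MOD p] := by
  have : NeZero p := ⟨hp.ne'⟩
  rw [← ZMod.natCast_eq_natCast_iff, Nat.cast_mul, firstExp, ZMod.natCast_zmod_val, mul_right_comm,
    mul_assoc, ZMod.coe_mul_inv_eq_one s hc.symm, mul_one]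

@[simp]
lemma firstExp_zero : firstExp s p M 0 = 0 := by
  simp [firstExp]

@[simp]
lemma firstExp_self : firstExp s p M p = 0 := by
  simp [firstExp]

lemma midExp_self (hp : 0 < p) : midExp s p M p = M := by
  simp [midExp, hp]

lemma zeroExp_self (hp : 0 < p) (hpM : p ≤ M) : zeroExp s p M p = 0 := by
  simp [zeroExp, midExp_self hp, hpM]

lemma firstExp_mul_le (hp : 0 < p) (hM : p * s ≤ M) : firstExp s p M k * s ≤ k * M := by
  rcases k.eq_zero_or_pos with rfl | hk
  · simp
  · calc firstExp s p M k * s ≤ p * s := Nat.mul_le_mul_right s (firstExp_lt hp).le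
      _ ≤ M := hM
      _ ≤ k * M := Nat.le_mul_of_pos_left M hk

lemma firstExp_mul_add_midExp_mul (hp : 0 < p) (hc : p.Coprime s) (hM : p * s ≤ M) :
    firstExp s p M k * s + midExp s p M k * p = k * M := by
  have hle := firstExp_mul_le (k := k) hp hM
  have hdvd := (Nat.modEq_iff_dvd' hle).mp (firstExp_mul_modEq hp hc)
  rw [midExp, Nat.div_mul_cancel hdvd, Nat.add_sub_cancel' hle]

lemma add_le_of_weight_eq {a b s p M k : ℕ} (ha : a < p) (hsp : s < p) (hk : k < p) (hpM : p ≤ M)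
    (hM : p * (p - s) ≤ M) (hw : a * s + b * p = k * M) : a + b ≤ M - p + k := by
  obtain ⟨N, rfl⟩ := Nat.exists_eq_add_of_le hpM
  rw [Nat.add_sub_cancel_left]
  have hweight : p * (a + b) = a * (p - s) + k * (p + N) := by
    obtain ⟨d, rfl⟩ := Nat.exists_eq_add_of_le hsp.le
    rw [← hw, Nat.add_sub_cancel_left]
    ring
  have ha' : a * (p - s) < p * (p - s) := Nat.mul_lt_mul_of_pos_right ha (Nat.sub_pos_of_lt hsp)
  have hlt : p * (a + b) < p * (N + k + 1) :=
    calc p * (a + b) < p + N + k * (p + N) := by lia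
      _ = p * (k + 1) + (k + 1) * N := by ring
      _ ≤ p * (k + 1) + p * N := by gcongr; exact hk
      _ = p * (N + k + 1) := by ring
  exact Nat.lt_succ_iff.mp (Nat.lt_of_mul_lt_mul_left hlt)

namespace LiftCondition

lemma mid_pos (h : LiftCondition s p M) : 0 < p := h.lt_mid.pos

lemma weight_eq (h : LiftCondition s p M) (k : ℕ) :
    firstExp s p M k * s + midExp s p M k * p = k * M :=
  firstExp_mul_add_midExp_mul h.mid_pos h.coprime h.mul_le

lemma degree_eq (h : LiftCondition s p M) (hk : k ≤ p) :
    zeroExp s p M k + (firstExp s p M k + midExp s p M k) = M - p + k := by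
  refine Nat.sub_add_cancel ?_
  rcases hk.lt_or_eq with hk | rfl
  · exact add_le_of_weight_eq (firstExp_lt h.mid_pos) h.lt_mid hk h.mid_lt.le h.mul_sub_le
      (h.weight_eq k)
  · rw [firstExp_self, midExp_self h.mid_pos, zero_add, Nat.sub_add_cancel h.mid_lt.le]

-- If both exponents vanished, `xᵢ ^ b` would have `b = M - p + k` and weight `b p = k M`, that is
-- `(p - k) (M - p) = 0`.
lemma zeroExp_ne_zero_or_firstExp_ne_zero (h : LiftCondition s p M) (hk : k < p) :
    zeroExp s p M k ≠ 0 ∨ firstExp s p M k ≠ 0 := by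
  by_contra! ⟨he, ha⟩
  have hdeg := h.degree_eq hk.le
  have hweight := h.weight_eq k
  rw [he, ha, zero_add, zero_add] at hdeg
  rw [ha, hdeg, zero_mul, zero_add] at hweight
  obtain ⟨N, rfl⟩ := Nat.exists_eq_add_of_le h.mid_lt.le
  have hN : 0 < N := Nat.pos_of_lt_add_right h.mid_lt
  rw [Nat.add_sub_cancel_left] at hweight
  have hpk : p * N = k * N := by linarith
  exact hk.ne' (Nat.eq_of_mul_eq_mul_right hN hpk)

end LiftCondition

end Exponents

section Equations

variable (R : Type*) [CommRing R] {s p M : ℕ}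

/-- The equation `x₁ ^ b = x₀ ^ (b - a) x₂ ^ a` of the plane curve `C(a, b)`, for `a ≤ b`. -/
noncomputable def planeEquation (a b : ℕ) : MvPolynomial ℕ R :=
  X 1 ^ b - X 0 ^ (b - a) * X 2 ^ a

/-- The monomial `x₀ ^ e x₁ ^ a xᵢ ^ b` that takes the value `x₀ ^ (M - p) (x₀ t ^ M) ^ k` at
`x₁ = x₀ t ^ s`, `xᵢ = x₀ t ^ p`. -/
noncomputable def liftMonomial (s p M i k : ℕ) : MvPolynomial ℕ R :=
  X 0 ^ zeroExp s p M k * (X 1 ^ firstExp s p M k * X i ^ midExp s p M k)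

/-- The equation determining `xᵢ₊₁ = x₀ t ^ M` from `x₁ = x₀ t ^ s` and `xᵢ = x₀ t ^ p`. -/
noncomputable def liftEquation (s p M i : ℕ) : MvPolynomial ℕ R :=
  umbralSubPow (X (i + 1)) (liftMonomial R s p M i) p

/-- The `j`-th equation of the monomial curve `C(m 1, …, m n)`, for `j < n - 1`; it involves no
coordinate beyond `x (j + 2)`. -/
noncomputable def curveEquation (m : ℕ → ℕ) : ℕ → MvPolynomial ℕ R
  | 0 => planeEquation R (m 1) (m 2)
  | j + 1 => liftEquation R (m 1) (m (j + 2)) (m (j + 3)) (j + 2)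

variable {R}

lemma isHomogeneous_planeEquation {a b : ℕ} (hab : a ≤ b) :
    (planeEquation R a b).IsHomogeneous b := by
  have hmul := (isHomogeneous_X_pow (R := R) 0 (b - a)).mul (isHomogeneous_X_pow 2 a)
  rw [Nat.sub_add_cancel hab] at hmul
  exact (isHomogeneous_X_pow 1 b).sub hmul

lemma isHomogeneous_liftEquation (h : LiftCondition s p M) (i : ℕ) :
    (liftEquation R s p M i).IsHomogeneous M := by
  have hmonomial : ∀ k ≤ p, (liftMonomial R s p M i k).IsHomogeneous (M - p + 1 * k) := by
    intro k hk
    rw [one_mul, ← h.degree_eq hk]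
    exact (isHomogeneous_X_pow _ _).mul ((isHomogeneous_X_pow _ _).mul (isHomogeneous_X_pow _ _))
  have hlift := isHomogeneous_umbralSubPow (isHomogeneous_X R (i + 1)) hmonomial
  rwa [one_mul, Nat.sub_add_cancel h.mid_lt.le] at hlift

lemma exists_isHomogeneous_curveEquation {m : ℕ → ℕ} {n : ℕ} (h12 : m 1 ≤ m 2)
    (hlift : ∀ i, 2 ≤ i → i < n → LiftCondition (m 1) (m i) (m (i + 1))) {j : ℕ}
    (hj : j < n - 1) : ∃ d, (curveEquation R m j).IsHomogeneous d := by
  cases j with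
  | zero => exact ⟨m 2, isHomogeneous_planeEquation h12⟩
  | succ j => exact ⟨m (j + 3), isHomogeneous_liftEquation (hlift _ (by lia) (by lia)) _⟩

lemma X_pow_mem_supported_range {i j : ℕ} (hij : i < j) (r : ℕ) :
    (X i ^ r : MvPolynomial ℕ R) ∈ supported R (range j : Set ℕ) :=
  pow_mem (Algebra.subset_adjoin (Set.mem_image_of_mem X (mem_coe.mpr (mem_range.mpr hij)))) r

lemma vars_curveEquation_subset (m : ℕ → ℕ) (j : ℕ) :
    (curveEquation R m j).vars ⊆ range (j + 3) := by
  rw [← coe_subset, ← mem_supported]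
  have hX {i : ℕ} (hi : i < j + 3) (r : ℕ) := X_pow_mem_supported_range (R := R) hi r
  cases j with
  | zero => exact sub_mem (hX (by lia) _) (mul_mem (hX (by lia) _) (hX (by lia) _))
  | succ j =>
    refine umbralSubPow_mem (pow_one (X (j + 3) : MvPolynomial ℕ R) ▸ hX (by lia) 1) fun k => ?_
    exact mul_mem (hX (by lia) _) (mul_mem (hX (by lia) _) (hX (by lia) _))

end Equations

section Evaluation

variable {R : Type*} [CommRing R] {s p M i : ℕ} {x : ℕ → R} {t : R}

lemma eval_liftMonomial (s p M i k : ℕ) (x : ℕ → R) :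
    eval x (liftMonomial R s p M i k) =
      x 0 ^ zeroExp s p M k * (x 1 ^ firstExp s p M k * x i ^ midExp s p M k) := by
  simp only [liftMonomial, map_mul, map_pow, eval_X]

lemma eval_liftEquation (s p M i : ℕ) (x : ℕ → R) :
    eval x (liftEquation R s p M i) =
      umbralSubPow (x (i + 1)) (fun k => eval x (liftMonomial R s p M i k)) p := by
  rw [liftEquation, map_umbralSubPow, eval_X]

lemma eval_liftMonomial_of_eq_mul_pow (h : LiftCondition s p M) {k : ℕ} (hk : k ≤ p)
    (hx₁ : x 1 = x 0 * t ^ s) (hxᵢ : x i = x 0 * t ^ p) :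
    eval x (liftMonomial R s p M i k) = x 0 ^ (M - p) * (x 0 * t ^ M) ^ k := by
  rw [eval_liftMonomial, hx₁, hxᵢ]
  calc _ = x 0 ^ (zeroExp s p M k + (firstExp s p M k + midExp s p M k)) *
        t ^ (firstExp s p M k * s + midExp s p M k * p) := by ring
    _ = x 0 ^ (M - p + k) * t ^ (k * M) := by rw [h.degree_eq hk, h.weight_eq k]
    _ = _ := by ring

variable [IsDomain R]

lemma eval_planeEquation_eq_zero_iff_of_eq_zero {a b : ℕ} (hab : a < b) (hx : x 0 = 0) :
    eval x (planeEquation R a b) = 0 ↔ x 1 = 0 := by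
  simp [planeEquation, hx, Nat.sub_ne_zero_of_lt hab, (Nat.zero_lt_of_lt hab).ne']

lemma eval_liftEquation_eq_zero_iff_of_ne_zero (h : LiftCondition s p M) (hx₀ : x 0 ≠ 0)
    (hx₁ : x 1 = x 0 * t ^ s) (hxᵢ : x i = x 0 * t ^ p) :
    eval x (liftEquation R s p M i) = 0 ↔ x (i + 1) = x 0 * t ^ M := by
  rw [eval_liftEquation,
    umbralSubPow_eq_mul_sub_pow fun k hk => eval_liftMonomial_of_eq_mul_pow h hk hx₁ hxᵢ,
    mul_eq_zero, or_iff_right (pow_ne_zero _ hx₀), pow_eq_zero_iff h.mid_pos.ne', sub_eq_zero]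

lemma eval_liftEquation_eq_zero_iff_of_eq_zero (h : LiftCondition s p M) (hx₀ : x 0 = 0)
    (hx₁ : x 1 = 0) : eval x (liftEquation R s p M i) = 0 ↔ x i = 0 := by
  have hlower : ∀ k < p, eval x (liftMonomial R s p M i k) = 0 := by
    intro k hk
    rw [eval_liftMonomial, hx₀, hx₁]
    rcases h.zeroExp_ne_zero_or_firstExp_ne_zero hk with he | ha
    · rw [zero_pow he, zero_mul]
    · rw [zero_pow ha, zero_mul, mul_zero]
  have htop : eval x (liftMonomial R s p M i p) = x i ^ M := by
    rw [eval_liftMonomial, zeroExp_self h.mid_pos h.mid_lt.le, firstExp_self,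
      midExp_self h.mid_pos, pow_zero, pow_zero, one_mul, one_mul]
  rw [eval_liftEquation, umbralSubPow_eq_last hlower, htop, mul_eq_zero,
    or_iff_right (pow_ne_zero _ (neg_ne_zero.mpr one_ne_zero)),
    pow_eq_zero_iff (h.mid_pos.trans h.mid_lt).ne']

lemma eval_planeEquation_eq_zero_iff_of_ne_zero {K : Type*} [Field K] {x : ℕ → K} {a b : ℕ}
    (hab : a ≤ b) (hc : a.Coprime b) (hx : x 0 ≠ 0) :
    eval x (planeEquation K a b) = 0 ↔ ∃ t, x 1 = x 0 * t ^ a ∧ x 2 = x 0 * t ^ b := by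
  obtain ⟨y, hy⟩ : x 0 ∣ x 1 := hx.isUnit.dvd
  obtain ⟨z, hz⟩ : x 0 ∣ x 2 := hx.isUnit.dvd
  have hchart : eval x (planeEquation K a b) = x 0 ^ b * (y ^ b - z ^ a) := by
    simp only [planeEquation, map_sub, map_mul, map_pow, eval_X, hy, hz]
    rw [mul_pow, mul_pow, ← mul_assoc, pow_sub_mul_pow _ hab, mul_sub]
  rw [hchart, mul_eq_zero, or_iff_right (pow_ne_zero b hx), sub_eq_zero,
    pow_eq_pow_iff_of_coprime hc.symm]
  simp only [hy, hz, mul_right_inj' hx]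

end Evaluation

section MonomialCone

/-- The affine cone over the projective monomial curve `C(m 1, …, m n)`. Points are sequences, of
which only the coordinates `x 0, …, x n` are constrained. -/
def monomialCone (R : Type*) [CommRing R] (m : ℕ → ℕ) (n : ℕ) : Set (ℕ → R) :=
  {x | ∃ u v : R, x 0 = u ^ m n ∧ ∀ j, 1 ≤ j → j ≤ n → x j = u ^ (m n - m j) * v ^ m j}

section Domain

variable {R : Type*} [CommRing R] [IsDomain R] {m : ℕ → ℕ} {n : ℕ} {x : ℕ → R}

lemma mem_monomialCone_iff_of_eq_zero (hm : ∀ j, 1 ≤ j → j < n → m j < m n) (hn : m n ≠ 0)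
    (hroot : ∃ v, v ^ m n = x n) (hx : x 0 = 0) :
    x ∈ monomialCone R m n ↔ ∀ j, 1 ≤ j → j < n → x j = 0 := by
  constructor
  · rintro ⟨u, v, hu, hv⟩ j hj hjn
    obtain rfl : u = 0 := (pow_eq_zero_iff hn).mp (hu.symm.trans hx)
    rw [hv j hj hjn.le, zero_pow (Nat.sub_ne_zero_of_lt (hm j hj hjn)), zero_mul]
  · intro hzero
    obtain ⟨v, hv⟩ := hroot
    refine ⟨0, v, by rw [hx, zero_pow hn], fun j hj hjn => ?_⟩
    rcases hjn.lt_or_eq with hjn | rfl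
    · rw [hzero j hj hjn, zero_pow (Nat.sub_ne_zero_of_lt (hm j hj hjn)), zero_mul]
    · rw [hv, Nat.sub_self, pow_zero, one_mul]

lemma curveEquations_vanish_iff_of_eq_zero (h12 : m 1 < m 2)
    (hlift : ∀ i, 2 ≤ i → i < n → LiftCondition (m 1) (m i) (m (i + 1))) (hx : x 0 = 0) :
    (∀ j < n - 1, eval x (curveEquation R m j) = 0) ↔ ∀ j, 1 ≤ j → j < n → x j = 0 := by
  have hplane : eval x (curveEquation R m 0) = 0 ↔ x 1 = 0 :=
    eval_planeEquation_eq_zero_iff_of_eq_zero h12 hx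
  have hstep (hx₁ : x 1 = 0) {j : ℕ} (hj : j < n - 1) :
      eval x (curveEquation R m j) = 0 ↔ x (j + 1) = 0 := by
    cases j with
    | zero => exact hplane
    | succ j =>
      exact eval_liftEquation_eq_zero_iff_of_eq_zero (hlift (j + 2) (by lia) (by lia)) hx hx₁
  constructor
  · intro hF j hj hjn
    have hx₁ : x 1 = 0 := hplane.mp (hF 0 (by lia))
    obtain ⟨j, rfl⟩ := Nat.exists_eq_add_of_le' hj
    exact (hstep hx₁ (by lia)).mp (hF j (by lia))
  · intro hzero j hj
    exact (hstep (hzero 1 le_rfl (by lia)) hj).mpr (hzero (j + 1) (by lia) (by lia))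

end Domain

variable {K : Type*} [Field K] {m : ℕ → ℕ} {n : ℕ} {x : ℕ → K}

lemma mem_monomialCone_iff_of_ne_zero (hm : ∀ j, 1 ≤ j → j ≤ n → m j ≤ m n) (hn : m n ≠ 0)
    (hroot : ∃ u, u ^ m n = x 0) (hx : x 0 ≠ 0) :
    x ∈ monomialCone K m n ↔ ∃ t, ∀ j, 1 ≤ j → j ≤ n → x j = x 0 * t ^ m j := by
  have hchart (u t : K) {j : ℕ} (hj : m j ≤ m n) :
      u ^ (m n - m j) * (u * t) ^ m j = u ^ m n * t ^ m j := by
    rw [mul_pow, ← mul_assoc, pow_sub_mul_pow u hj]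
  constructor
  · rintro ⟨u, v, hu, hv⟩
    have hu₀ : u ≠ 0 := by
      rintro rfl
      exact hx (hu.trans (zero_pow hn))
    refine ⟨v / u, fun j hj hjn => ?_⟩
    rw [hv j hj hjn, hu, ← hchart u _ (hm j hj hjn), mul_div_cancel₀ v hu₀]
  · rintro ⟨t, ht⟩
    obtain ⟨u, hu⟩ := hroot
    refine ⟨u, u * t, hu.symm, fun j hj hjn => ?_⟩
    rw [ht j hj hjn, ← hu, hchart u _ (hm j hj hjn)]

lemma curveEquations_vanish_iff_of_ne_zero (hn : 2 ≤ n) (h12 : m 1 ≤ m 2)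
    (hc : (m 1).Coprime (m 2))
    (hlift : ∀ i, 2 ≤ i → i < n → LiftCondition (m 1) (m i) (m (i + 1))) (hx : x 0 ≠ 0) :
    (∀ j < n - 1, eval x (curveEquation K m j) = 0) ↔
      ∃ t, ∀ j, 1 ≤ j → j ≤ n → x j = x 0 * t ^ m j := by
  constructor
  · intro hF
    obtain ⟨t, ht₁, ht₂⟩ :=
      (eval_planeEquation_eq_zero_iff_of_ne_zero h12 hc hx).mp (hF 0 (by lia))
    have hcurve : ∀ j, j + 2 ≤ n → x (j + 2) = x 0 * t ^ m (j + 2) := by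
      intro j
      induction j with
      | zero => exact fun _ => ht₂
      | succ j ih =>
        intro hj
        exact (eval_liftEquation_eq_zero_iff_of_ne_zero (hlift (j + 2) (by lia) (by lia)) hx ht₁
          (ih (by lia))).mp (hF (j + 1) (by lia))
    refine ⟨t, fun j hj hjn => ?_⟩
    match j with
    | 1 => exact ht₁
    | j + 2 => exact hcurve j hjn
  · rintro ⟨t, ht⟩ j hj
    cases j with
    | zero =>
      exact (eval_planeEquation_eq_zero_iff_of_ne_zero h12 hc hx).mpr
        ⟨t, ht 1 le_rfl (by lia), ht 2 (by lia) hn⟩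
    | succ j =>
      exact (eval_liftEquation_eq_zero_iff_of_ne_zero (hlift (j + 2) (by lia) (by lia)) hx
        (ht 1 le_rfl (by lia)) (ht (j + 2) (by lia) (by lia))).mpr (ht (j + 3) (by lia) (by lia))

theorem curveEquations_vanish_iff_mem_monomialCone (hn : 2 ≤ n) (hpos : 0 < m 1)
    (hm : StrictMonoOn m (Set.Icc 1 n)) (hc : (m 1).Coprime (m 2))
    (hlift : ∀ i, 2 ≤ i → i < n → LiftCondition (m 1) (m i) (m (i + 1)))
    (hroot : ∀ y : K, ∃ u, u ^ m n = y) :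
    (∀ j < n - 1, eval x (curveEquation K m j) = 0) ↔ x ∈ monomialCone K m n := by
  have hnmem : n ∈ Set.Icc 1 n := ⟨by lia, le_rfl⟩
  have h12 : m 1 < m 2 := hm ⟨le_rfl, by lia⟩ ⟨by lia, hn⟩ one_lt_two
  have hmn : m n ≠ 0 := (hpos.trans_le (hm.monotoneOn ⟨le_rfl, by lia⟩ hnmem (by lia))).ne'
  by_cases hx : x 0 = 0
  · rw [curveEquations_vanish_iff_of_eq_zero h12 hlift hx, mem_monomialCone_iff_of_eq_zero
      (fun j hj hjn => hm ⟨hj, hjn.le⟩ hnmem hjn) hmn (hroot (x n)) hx]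
  · rw [curveEquations_vanish_iff_of_ne_zero hn h12.le hc hlift hx, mem_monomialCone_iff_of_ne_zero
      (fun j hj hjn => hm.monotoneOn ⟨hj, hjn⟩ hnmem hjn) hmn (hroot (x 0)) hx]

end MonomialCone

theorem stmt_14_general {K : Type*} [Field K] (n : ℕ) (hn : 2 ≤ n) (m : ℕ → ℕ)
    (hroot : ∀ y : K, ∃ u, u ^ m n = y)
    (hpos : ∀ i, 1 ≤ i → i ≤ n → 0 < m i)
    (hmono : ∀ i, 1 ≤ i → i < n → m i < m (i + 1))
    (hgcd : Finset.gcd (Finset.Icc 1 n) m = 1)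
    (hcop : ∀ i, 3 ≤ i → i ≤ n → Nat.Coprime (m (i - 1)) (m 1))
    (hbig : ∀ i, 3 ≤ i → i ≤ n →
      m (i - 1) * m 1 ≤ m i ∧ m (i - 1) * (m (i - 1) - m 1) ≤ m i) :
    ∃ F : ℕ → MvPolynomial ℕ K,
      (∀ j, j < n - 1 → ∃ d, (F j).IsHomogeneous d) ∧
      (∀ j, j < n - 1 → (F j).vars ⊆ Finset.range (n + 1)) ∧
      ∀ x : ℕ → K,
        (∀ j, j < n - 1 → MvPolynomial.eval x (F j) = 0) ↔
        ∃ u v : K, x 0 = u ^ m n ∧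
          ∀ j, 1 ≤ j → j ≤ n → x j = u ^ (m n - m j) * v ^ m j := by
  have hm : StrictMonoOn m (Set.Icc 1 n) :=
    strictMonoOn_of_lt_add_one Set.ordConnected_Icc fun i _ hi hi' => hmono i hi.1 hi'.2
  have hc : (m 1).Coprime (m 2) := by
    rcases hn.eq_or_lt with rfl | hn
    · have hIcc : Icc 1 2 = {1, 2} := rfl
      rw [hIcc, gcd_insert, gcd_singleton, normalize_eq] at hgcd
      exact hgcd
    · exact (hcop 3 le_rfl hn).symm
  have hlift : ∀ i, 2 ≤ i → i < n → LiftCondition (m 1) (m i) (m (i + 1)) := fun i hi hin =>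
    { lt_mid := hm ⟨le_rfl, by lia⟩ ⟨by lia, hin.le⟩ hi
      mid_lt := hmono i (by lia) hin
      coprime := hcop (i + 1) (by lia) hin
      mul_le := (hbig (i + 1) (by lia) hin).1
      mul_sub_le := (hbig (i + 1) (by lia) hin).2 }
  have h12 : m 1 ≤ m 2 := (hmono 1 le_rfl hn).le
  exact ⟨curveEquation K m, fun j hj => exists_isHomogeneous_curveEquation h12 hlift hj,
    fun j hj => (vars_curveEquation_subset m j).trans (range_subset_range.mpr (by lia)),
    fun _ => curveEquations_vanish_iff_mem_monomialCone hn (hpos 1 le_rfl (by lia)) hm hc hlift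
      hroot⟩

/-- Proposition 1 of the paper: if `m_1 < m_2 < ⋯ < m_n` are positive integers
with `gcd(m_1, …, m_n) = 1`, `gcd(m_{i-1}, m_1) = 1` and
`m_i ≥ max{m_{i-1}·m_1, m_{i-1}·(m_{i-1} - m_1)}` for all `3 ≤ i ≤ n`, then the
monomial curve `C(m_1, …, m_n) ⊆ ℙⁿ` over an algebraically closed field `K` is a
set-theoretic complete intersection: there are `n - 1` homogeneous polynomials
in `K[x_0, …, x_n]` whose common zero locus in `K^{n+1}` is exactly the affine
cone `{(u^{m_n}, u^{m_n-m_1}v^{m_1}, …, u^{m_n-m_{n-1}}v^{m_{n-1}}, v^{m_n})}`. -/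
theorem stmt_14 {K : Type*} [Field K] [IsAlgClosed K] (n : ℕ) (hn : 2 ≤ n)
    (m : ℕ → ℕ)
    (hpos : ∀ i, 1 ≤ i → i ≤ n → 0 < m i)
    (hmono : ∀ i, 1 ≤ i → i < n → m i < m (i + 1))
    (hgcd : Finset.gcd (Finset.Icc 1 n) m = 1)
    (hcop : ∀ i, 3 ≤ i → i ≤ n → Nat.Coprime (m (i - 1)) (m 1))
    (hbig : ∀ i, 3 ≤ i → i ≤ n →
      m (i - 1) * m 1 ≤ m i ∧ m (i - 1) * (m (i - 1) - m 1) ≤ m i) :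
    ∃ F : ℕ → MvPolynomial ℕ K,
      (∀ j, j < n - 1 → ∃ d, (F j).IsHomogeneous d) ∧
      (∀ j, j < n - 1 → (F j).vars ⊆ Finset.range (n + 1)) ∧
      ∀ x : ℕ → K,
        (∀ j, j < n - 1 → MvPolynomial.eval x (F j) = 0) ↔
        ∃ u v : K, x 0 = u ^ m n ∧
          ∀ j, 1 ≤ j → j ≤ n → x j = u ^ (m n - m j) * v ^ m j := by
  exact stmt_14_general n hn m
    (fun y => IsAlgClosed.exists_pow_nat_eq y (hpos n (by lia) le_rfl)) hpos hmono hgcd hcop hbig
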